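/- Let H be a real Hilbert space, M₀ ⊆ H a closed linear subspace, and r₁, …, r_k ∈ [0,1) with Σ_{j=1}^k arcsin r_j ≤ π/2. Define recursively M_j := S(M_{j-1}, r_j) for j = 1, …, k. Then M_k ⊆ S(M₀, sin(Σ_{j=1}^k arcsin r_j)). -/

import Mathlib

/-- The conelike neighborhood `S(M, r)` of a set `M` in a real Hilbert space. -/
noncomputable def coneNbhd {H : Type*} [NormedAddCommGroup H] [InnerProductSpace ℝ H]
    (M : Set H) (r : ℝ) : Set H :=
  {v | sInf {d : ℝ | ∃ u ∈ M, u ≠ 0 ∧ d = ‖v - u‖ / ‖u‖} ≤ r} ∪ {0}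

/-
The cone `S(M, sin α)` describes an angle: over a ray at angle `θ < π / 2` from `v`, the least
value of `‖v - u‖ / ‖u‖` is `sin θ`, attained where `v - u` is orthogonal to `v`. So every `v ≠ 0`
in `S(M, r)` lies at angle at most `arcsin r` from `M`, angles add up along the iteration by the
triangle inequality for angles, and because `M₀` is closed under positive scaling the angular
bound for `M₀` turns back into membership in `S(M₀, sin (∑ arcsin r_j))`.
-/

open InnerProductGeometry Real

section ConeNbhd

variable {H : Type*} [NormedAddCommGroup H] [InnerProductSpace ℝ H] {M : Set H} {u v : H}
  {r α β : ℝ}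

theorem angle_lt_arcsin_of_norm_sub_lt (hr : r ≤ 1) (h : ‖v - u‖ < r * ‖u‖) :
    angle u v < arcsin r := by
  have hlt : ‖v - u‖ < ‖u‖ := h.trans_le (mul_le_of_le_one_left (norm_nonneg u) hr)
  have hu : 0 < ‖u‖ := (norm_nonneg _).trans_lt hlt
  have hinner : 0 < inner ℝ u v := by
    have hsq : ‖v - u‖ ^ 2 < ‖u‖ ^ 2 := by gcongr
    rw [norm_sub_sq_real, real_inner_comm] at hsq
    linarith [sq_nonneg ‖v‖]
  have hv : v ≠ 0 := by
    rintro rfl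
    simp at hlt
  have hacute : angle u v < π / 2 :=
    arccos_lt_pi_div_two.2 (div_pos hinner (mul_pos hu (norm_pos_iff.2 hv)))
  have hsin : sin (angle u v) * ‖u‖ < r * ‖u‖ :=
    calc sin (angle u v) * ‖u‖ = sin (angle v (u - v)) * ‖u - v‖ :=
          sin_angle_mul_norm_eq_sin_angle_mul_norm u v
      _ ≤ ‖v - u‖ := by
          rw [norm_sub_rev]
          exact mul_le_of_le_one_left (norm_nonneg _) (sin_le_one _)
      _ < r * ‖u‖ := h
  exact (lt_arcsin_iff_sin_lt' ⟨by linarith [angle_nonneg u v, pi_pos], hacute⟩).2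
    (lt_of_mul_lt_mul_right hsin hu.le)

theorem exists_pos_norm_sub_smul_eq_sin_angle_mul (h : angle u v < π / 2) :
    ∃ t : ℝ, 0 < t ∧ ‖v - t • u‖ = sin (angle u v) * ‖t • u‖ := by
  have hu : u ≠ 0 := by
    rintro rfl
    simp at h
  have hv : v ≠ 0 := by
    rintro rfl
    simp at h
  have hinner : 0 < inner ℝ u v := by
    rw [← cos_angle_mul_norm_mul_norm]
    have := cos_pos_of_mem_Ioo ⟨by linarith [angle_nonneg u v, pi_pos], h⟩
    positivity
  -- This `t` puts a right angle at `v` in the triangle with vertices `0`, `v` and `t • u`.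
  refine ⟨‖v‖ ^ 2 / inner ℝ u v, by positivity, ?_⟩
  set t := ‖v‖ ^ 2 / inner ℝ u v with ht
  have hright : angle v (t • u - v) = π / 2 := by
    rw [← inner_eq_zero_iff_angle_eq_pi_div_two, inner_sub_right, inner_smul_right,
      real_inner_self_eq_norm_sq, real_inner_comm, ht, div_mul_cancel₀ _ hinner.ne', sub_self]
  have hlaw := sin_angle_mul_norm_eq_sin_angle_mul_norm (t • u) v
  rw [hright, sin_pi_div_two, one_mul, angle_smul_left_of_pos u v (by positivity)] at hlaw
  rw [hlaw, norm_sub_rev]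

theorem exists_pos_norm_sub_smul_lt (hr : 1 < r) (hu : u ≠ 0) (v : H) :
    ∃ t : ℝ, 0 < t ∧ ‖v - t • u‖ < r * ‖t • u‖ := by
  obtain ⟨t, ht, hvt⟩ :=
    exists_pos_lt_mul (mul_pos (sub_pos.2 hr) (norm_pos_iff.2 hu)) ‖v‖
  refine ⟨t, ht, (norm_sub_le _ _).trans_lt ?_⟩
  rw [norm_smul, norm_of_nonneg ht.le]
  linarith

theorem zero_mem_coneNbhd (M : Set H) (r : ℝ) : 0 ∈ coneNbhd M r :=
  Or.inr rfl

theorem mem_coneNbhd_iff (hM : ∃ u ∈ M, u ≠ 0) (hv : v ≠ 0) :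
    v ∈ coneNbhd M r ↔ ∀ ρ > r, ∃ u ∈ M, u ≠ 0 ∧ ‖v - u‖ < ρ * ‖u‖ := by
  obtain ⟨u₀, hu₀, hu₀_ne⟩ := hM
  have hbdd : BddBelow {d : ℝ | ∃ u ∈ M, u ≠ 0 ∧ d = ‖v - u‖ / ‖u‖} :=
    ⟨0, by rintro _ ⟨u, -, -, rfl⟩; positivity⟩
  have hne : {d : ℝ | ∃ u ∈ M, u ≠ 0 ∧ d = ‖v - u‖ / ‖u‖}.Nonempty := ⟨_, u₀, hu₀, hu₀_ne, rfl⟩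
  simp only [coneNbhd, Set.mem_union, Set.mem_ofPred_eq, Set.mem_singleton_iff, hv, or_false]
  rw [← forall_gt_iff_le]
  refine forall₂_congr fun ρ _ => (csInf_lt_iff hbdd hne).trans ⟨?_, ?_⟩
  · rintro ⟨_, ⟨u, hu, hu_ne, rfl⟩, hlt⟩
    exact ⟨u, hu, hu_ne, (div_lt_iff₀ (norm_pos_iff.2 hu_ne)).1 hlt⟩
  · rintro ⟨u, hu, hu_ne, hlt⟩
    exact ⟨_, ⟨u, hu, hu_ne, rfl⟩, (div_lt_iff₀ (norm_pos_iff.2 hu_ne)).2 hlt⟩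

theorem subset_coneNbhd (hr : 0 ≤ r) : M ⊆ coneNbhd M r := by
  intro v hvM
  rcases eq_or_ne v 0 with rfl | hv
  · exact zero_mem_coneNbhd M r
  refine (mem_coneNbhd_iff ⟨v, hvM, hv⟩ hv).2 fun ρ hρ => ⟨v, hvM, hv, ?_⟩
  rw [sub_self, norm_zero]
  exact mul_pos (hr.trans_lt hρ) (norm_pos_iff.2 hv)

-- `sInf ∅ = 0` in `ℝ`, whereas the usual convention `inf ∅ = ∞` would give `{0}`.
theorem coneNbhd_eq_univ_of_forall_eq_zero (hM : ∀ u ∈ M, u = 0) (hr : 0 ≤ r) :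
    coneNbhd M r = Set.univ := by
  refine Set.eq_univ_of_forall fun v => Or.inl ?_
  have hempty : {d : ℝ | ∃ u ∈ M, u ≠ 0 ∧ d = ‖v - u‖ / ‖u‖} = ∅ :=
    Set.eq_empty_of_forall_notMem fun _ ⟨u, hu, hu_ne, _⟩ => hu_ne (hM u hu)
  rwa [Set.mem_ofPred_eq, hempty, sInf_empty]

/-- The angular neighborhood of `M` of opening `α`: the vectors whose angle to the nonzero elements
of `M` has infimum at most `α`. It replaces `coneNbhd M (sin α)` in the iteration, since openings
simply add up. The infimum is expressed by approximation, and `0` is a member by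
convention, as it is for `coneNbhd`. -/
def angularNbhd (M : Set H) (α : ℝ) : Set H :=
  {v | v ≠ 0 → ∀ β > α, ∃ u ∈ M, u ≠ 0 ∧ angle u v < β}

theorem subset_angularNbhd (hα : 0 ≤ α) : M ⊆ angularNbhd M α := fun v hvM hv _ hβ =>
  ⟨v, hvM, hv, (angle_self hv).trans_lt (hα.trans_lt hβ)⟩

theorem angularNbhd_mono {N : Set H} (h : M ⊆ N) : angularNbhd M α ⊆ angularNbhd N α :=
  fun _ hvM hv β hβ =>
    let ⟨u, hu, huv⟩ := hvM hv β hβ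
    ⟨u, h hu, huv⟩

theorem angularNbhd_angularNbhd_subset :
    angularNbhd (angularNbhd M α) β ⊆ angularNbhd M (α + β) := by
  intro v hvM hv γ hγ
  obtain ⟨w, hwM, hw, hwv⟩ := hvM hv (β + (γ - (α + β)) / 2) (by linarith)
  obtain ⟨u, hu, hu_ne, huw⟩ := hwM hw (α + (γ - (α + β)) / 2) (by linarith)
  exact ⟨u, hu, hu_ne, by linarith [angle_le_angle_add_angle u w v]⟩

theorem coneNbhd_subset_angularNbhd (hM : ∃ u ∈ M, u ≠ 0) (hr : r < 1) :
    coneNbhd M r ⊆ angularNbhd M (arcsin r) := by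
  intro v hvM hv β hβ
  have hlt : arcsin r < min β (π / 2) := lt_min hβ (arcsin_lt_pi_div_two.2 hr)
  have hlower : -(π / 2) < min β (π / 2) := (neg_pi_div_two_le_arcsin r).trans_lt hlt
  obtain ⟨u, hu, hu_ne, huv⟩ := (mem_coneNbhd_iff hM hv).1 hvM (sin (min β (π / 2)))
    ((arcsin_lt_iff_lt_sin' ⟨hlower, min_le_right _ _⟩).1 hlt)
  refine ⟨u, hu, hu_ne, ?_⟩
  calc angle u v < arcsin (sin (min β (π / 2))) :=
        angle_lt_arcsin_of_norm_sub_lt (sin_le_one _) huv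
    _ = min β (π / 2) := arcsin_sin hlower.le (min_le_right _ _)
    _ ≤ β := min_le_left _ _

theorem coneNbhd_one_eq_univ (hM : ∃ u ∈ M, u ≠ 0)
    (hcone : ∀ c : ℝ, 0 < c → ∀ u ∈ M, c • u ∈ M) : coneNbhd M 1 = Set.univ := by
  refine Set.eq_univ_of_forall fun v => ?_
  rcases eq_or_ne v 0 with rfl | hv
  · exact zero_mem_coneNbhd M 1
  refine (mem_coneNbhd_iff hM hv).2 fun ρ hρ => ?_
  obtain ⟨u, hu, hu_ne⟩ := hM
  obtain ⟨t, ht, hlt⟩ := exists_pos_norm_sub_smul_lt hρ hu_ne v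
  exact ⟨t • u, hcone t ht u hu, smul_ne_zero ht.ne' hu_ne, hlt⟩

theorem angularNbhd_subset_coneNbhd_sin (hM : ∃ u ∈ M, u ≠ 0)
    (hcone : ∀ c : ℝ, 0 < c → ∀ u ∈ M, c • u ∈ M) (hα : α ∈ Set.Icc (-(π / 2)) (π / 2)) :
    angularNbhd M α ⊆ coneNbhd M (sin α) := by
  rcases hα.2.eq_or_lt with rfl | hα_lt
  · rw [sin_pi_div_two, coneNbhd_one_eq_univ hM hcone]
    exact Set.subset_univ _
  intro v hvM
  rcases eq_or_ne v 0 with rfl | hv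
  · exact zero_mem_coneNbhd M _
  refine (mem_coneNbhd_iff hM hv).2 fun ρ hρ => ?_
  obtain ⟨u, hu, hu_ne, huv⟩ :=
    hvM hv (arcsin ρ) ((lt_arcsin_iff_sin_lt' ⟨hα.1, hα_lt⟩).2 hρ)
  have hacute : angle u v < π / 2 := huv.trans_le (arcsin_le_pi_div_two ρ)
  have hsin : sin (angle u v) < ρ :=
    (lt_arcsin_iff_sin_lt' ⟨by linarith [angle_nonneg u v, pi_pos], hacute⟩).1 huv
  obtain ⟨t, ht, hnorm⟩ := exists_pos_norm_sub_smul_eq_sin_angle_mul hacute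
  have htu : t • u ≠ 0 := smul_ne_zero ht.ne' hu_ne
  exact ⟨t • u, hcone t ht u hu, htu,
    hnorm.trans_lt (mul_lt_mul_of_pos_right hsin (norm_pos_iff.2 htu))⟩

theorem last_subset_angularNbhd_sum_arcsin (k : ℕ) (r : Fin k → ℝ)
    (hr : ∀ j, 0 ≤ r j ∧ r j < 1) (M : Fin (k + 1) → Set H) (hM : ∃ u ∈ M 0, u ≠ 0)
    (hMrec : ∀ j : Fin k, M j.succ = coneNbhd (M j.castSucc) (r j)) :
    M (Fin.last k) ⊆ angularNbhd (M 0) (∑ j, arcsin (r j)) := by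
  have hmono : Monotone M := Fin.monotone_iff_le_succ.2 fun j => by
    rw [hMrec j]
    exact subset_coneNbhd (hr j).1
  induction k with
  | zero => exact subset_angularNbhd (by simp)
  | succ k ih =>
    have hprev : M (Fin.last k).castSucc ⊆ angularNbhd (M 0) (∑ j : Fin k, arcsin (r j.castSucc)) :=
      ih (fun j => r j.castSucc) (fun j => hr _) (fun j => M j.castSucc) hM
        (fun j => hMrec j.castSucc) (hmono.comp Fin.strictMono_castSucc.monotone)
    have hne : ∃ u ∈ M (Fin.last k).castSucc, u ≠ 0 :=
      hM.imp fun u hu => ⟨hmono (Fin.zero_le _) hu.1, hu.2⟩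
    rw [Fin.sum_univ_castSucc, ← Fin.succ_last, hMrec]
    exact (coneNbhd_subset_angularNbhd hne (hr _).2).trans
      ((angularNbhd_mono hprev).trans angularNbhd_angularNbhd_subset)

end ConeNbhd

theorem stmt4_general {H : Type*} [NormedAddCommGroup H] [InnerProductSpace ℝ H]
    (M₀ : Set H) (hcone : ∀ c : ℝ, 0 < c → ∀ u ∈ M₀, c • u ∈ M₀)
    (k : ℕ) (r : Fin k → ℝ) (hr : ∀ j, 0 ≤ r j ∧ r j < 1)
    (hsum : ∑ j, arcsin (r j) ≤ π / 2)
    (M : Fin (k + 1) → Set H) (hM0 : M 0 = M₀)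
    (hMrec : ∀ j : Fin k, M j.succ = coneNbhd (M j.castSucc) (r j)) :
    M (Fin.last k) ⊆ coneNbhd M₀ (sin (∑ j, arcsin (r j))) := by
  subst hM0
  have hsum_nonneg : 0 ≤ ∑ j, arcsin (r j) :=
    Finset.sum_nonneg fun j _ => arcsin_nonneg.2 (hr j).1
  by_cases hM : ∃ u ∈ M 0, u ≠ 0
  · exact (last_subset_angularNbhd_sum_arcsin k r hr M hM hMrec).trans
      (angularNbhd_subset_coneNbhd_sin hM hcone ⟨by linarith [pi_pos], hsum⟩)
  · push Not at hM
    rw [coneNbhd_eq_univ_of_forall_eq_zero hM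
      (sin_nonneg_of_nonneg_of_le_pi hsum_nonneg (by linarith [pi_pos]))]
    exact Set.subset_univ _

theorem stmt4 {H : Type*} [NormedAddCommGroup H] [InnerProductSpace ℝ H] [CompleteSpace H]
    (M₀ : Submodule ℝ H) (hclosed : IsClosed (M₀ : Set H))
    (k : ℕ) (r : Fin k → ℝ) (hr : ∀ j, 0 ≤ r j ∧ r j < 1)
    (hsum : ∑ j, Real.arcsin (r j) ≤ Real.pi / 2)
    (M : Fin (k + 1) → Set H) (hM0 : M 0 = (M₀ : Set H))
    (hMrec : ∀ j : Fin k, M j.succ = coneNbhd (M j.castSucc) (r j)) :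
    M (Fin.last k) ⊆ coneNbhd (M₀ : Set H) (Real.sin (∑ j, Real.arcsin (r j))) :=
  stmt4_general (M₀ : Set H) (fun c _ _ hu => M₀.smul_mem c hu) k r hr hsum M hM0 hMrec
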